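/- In the Section 3 setup, one has d' = d, and N is a monomial map: there exist a nonzero b ∈ F and an index i with 0 ≤ i ≤ 2lh − 1 such that N(x) = b·x^(p^i) for all x ∈ F. -/

import Mathlib

/-!
Over a field `F` with `p ^ n` elements, `n = 2 * l * h`, every additive map is a unique linearized
polynomial, and a bi-additive map has unique coefficients at the products `x ^ p ^ i * y ^ p ^ j`,
`i, j ∈ ZMod n`. Write `s`, `t`, `t'` for the indices `l * h`, `d * h`, `d' * h`, so that
`2 * s = 0` in `ZMod n`. The product `x ∗_d y` only involves pairs `(i, j)` with
`j - i ∈ {s, t, -t}`, and post-composition with an additive map preserves such a condition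
(`Supported.additive`). Hence both components of `N x ∗_{d'} N y = L (x ∗_d y)` along
`F = GF(q ^ l) ⊕ GF(q ^ l) ω` have their coefficients in that set.

Let `N x = ∑ a i * x ^ p ^ i`. In the first component `N x ^ q ^ l * N y + N x * N y ^ q ^ l`, the
diagonal coefficients show that `a i` and `a (i + s)` are never both nonzero. The coefficient at
`(i, j + s)` is then `a i * a j ^ q ^ l` when `a i, a j ≠ 0`, so differences of indices in the
support of `a` lie in `{0, s + t, s - t}`. If `a i` and `a (i + s + t)` were both nonzero, the second
component would have a nonzero coefficient at `(i + s + t + t', i)`, which forces one of `t + t'`,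
`s + t'`, `s + 2 * t + t'` to vanish; the last is impossible because `l + 2 * d + d'` is odd. So `N`
is a monomial, and the coefficient at `(i + t', i)` in the second component gives `t' ∈ {s, ±t}`,
which leaves `t' = t` as `0 < d, d' < l`.
-/

/-- The Budaghyan–Helleseth multiplication `x ∗_{(e,β)} y` on `F = GF(q^(2l))`,
relative to a fixed `ω` with `ω + ω^(q^l) = 0`. -/
def bhMul {F : Type*} [Field F] (q l e : ℕ) (β ω x y : F) : F :=
  x ^ q ^ l * y + x * y ^ q ^ l +
    (β * (x ^ q ^ e * y + x * y ^ q ^ e) +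
      β ^ q ^ l * (x ^ q ^ e * y + x * y ^ q ^ e) ^ q ^ l) * ω

/-! ### Linearized polynomials and bi-additive maps -/

/-- The power `x ↦ x ^ p ^ i` of the Frobenius endomorphism, with the exponent `i` read modulo `n`.
On a field with `p ^ n` elements this makes `i ↦ frob F p n i` additive in `i`. -/
noncomputable def frob (F : Type*) [Field F] (p n : ℕ) [ExpChar F p] (i : ZMod n) : F →+* F :=
  iterateFrobenius F p i.val

section Frob

set_option linter.unusedSectionVars false

variable {F : Type*} [Field F] [Fintype F] {p n : ℕ} [Fact p.Prime] [CharP F p] [NeZero n]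

lemma frob_natCast (hF : Fintype.card F = p ^ n) (k : ℕ) (x : F) :
    frob F p n (k : ZMod n) x = x ^ p ^ k := by
  have key : x ^ p ^ k = x ^ p ^ (k % n) := by
    conv_lhs => rw [← Nat.div_add_mod k n, pow_add, pow_mul, pow_mul p, ← hF,
      FiniteField.pow_card_pow]
  rw [frob, iterateFrobenius_def, ZMod.val_natCast, key]

lemma frob_add (hF : Fintype.card F = p ^ n) (i j : ZMod n) (x : F) :
    frob F p n (i + j) x = frob F p n i (frob F p n j x) := by
  rw [← ZMod.natCast_zmod_val i, ← ZMod.natCast_zmod_val j, ← Nat.cast_add,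
    frob_natCast hF, frob_natCast hF, frob_natCast hF, ← pow_mul, ← pow_add, add_comm]

lemma frob_injective (hF : Fintype.card F = p ^ n) (hp2 : p ≠ 2) {i j : ZMod n}
    (h : ∀ x : F, frob F p n i x = frob F p n j x) : i = j := by
  classical
  have hp : p.Prime := Fact.out
  obtain ⟨g, hg⟩ := IsCyclic.exists_generator (α := Fˣ)
  have hord : orderOf g = p ^ n - 1 := by
    rw [orderOf_eq_card_of_forall_mem_zpowers hg, Nat.card_eq_fintype_card,
      Fintype.card_units, hF]
  have hlt : ∀ k : ZMod n, p ^ k.val < orderOf g := by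
    intro k
    have h1 : k.val + 1 ≤ n := ZMod.val_lt k
    have h2 : p ^ (k.val + 1) ≤ p ^ n := Nat.pow_le_pow_right hp.pos h1
    have h3 : 3 ≤ p := by have := hp.two_le; omega
    have h4 : 1 ≤ p ^ k.val := Nat.one_le_pow _ _ hp.pos
    rw [pow_succ] at h2
    rw [hord]
    have h5 : p ^ k.val * 3 ≤ p ^ k.val * p := Nat.mul_le_mul_left _ h3
    omega
  have hgij : g ^ p ^ i.val = g ^ p ^ j.val := by
    have := h (g : F)
    simp only [frob, iterateFrobenius_def] at this
    exact_mod_cast this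
  have := pow_injOn_Iio_orderOf (hlt i) (hlt j) hgij
  exact ZMod.val_injective n (Nat.pow_right_injective hp.two_le this)

/-- Every additive map of a field with `p ^ n` elements is a linearized polynomial: the `n` powers
of the Frobenius are linearly independent (Dedekind), and `n` is the dimension of the space of
`ZMod p`-linear maps. -/
lemma exists_linearized (hF : Fintype.card F = p ^ n) (hp2 : p ≠ 2) (G : F → F)
    (hG : ∀ x y, G (x + y) = G x + G y) :
    ∃ a : ZMod n → F, ∀ x, G x = ∑ i, a i * frob F p n i x := by
  classical
  let _ : Algebra (ZMod p) F := ZMod.algebra F p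
  let lin : (F →+ F) → (F →ₗ[ZMod p] F) := fun f => f.toZModLinearMap p
  let v : ZMod n → (F →ₗ[ZMod p] F) := fun i => lin (frob F p n i).toAddMonoidHom
  have hinj : Function.Injective (fun i : ZMod n => ((frob F p n i : F →+* F) : F →* F)) := by
    intro i j hij
    exact frob_injective hF hp2 fun x => DFunLike.congr_fun hij x
  have hli : LinearIndependent F v := by
    rw [Fintype.linearIndependent_iff]
    intro g hg
    have := (linearIndependent_monoidHom F F).comp _ hinj
    rw [Fintype.linearIndependent_iff] at this
    apply this
    funext x
    have := DFunLike.congr_fun hg x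
    simpa [v, lin] using this
  have hfr : Module.finrank (ZMod p) F = n := by
    have := Module.card_eq_pow_finrank (K := ZMod p) (V := F)
    rw [hF, ZMod.card] at this
    exact (Nat.pow_right_injective (Fact.out : p.Prime).two_le this).symm
  have hspan := hli.span_eq_top_of_card_eq_finrank'
    (by rw [ZMod.card, Module.finrank_linearMap_self, hfr])
  have hmem : lin (AddMonoidHom.mk' G hG) ∈ Submodule.span F (Set.range v) := by
    rw [hspan]; trivial
  obtain ⟨a, ha⟩ := (Submodule.mem_span_range_iff_exists_fun F).1 hmem
  refine ⟨a, fun x => ?_⟩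
  have := DFunLike.congr_fun ha x
  simpa [v, lin] using this.symm

/-- The coefficients of a bi-additive map with respect to the products `x ^ p ^ i * y ^ p ^ j` are
unique: these products are distinct characters of the monoid `F × F`. -/
lemma bilin_coeff_unique (hF : Fintype.card F = p ^ n) (hp2 : p ≠ 2) (c c' : ZMod n → ZMod n → F)
    (h : ∀ x y, ∑ i, ∑ j, c i j * (frob F p n i x * frob F p n j y) =
      ∑ i, ∑ j, c' i j * (frob F p n i x * frob F p n j y)) : c = c' := by
  classical
  let χ : ZMod n × ZMod n → (F × F →* F) := fun ij =>
    ((frob F p n ij.1 : F →+* F) : F →* F).coprod ((frob F p n ij.2 : F →+* F) : F →* F)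
  have hinj : Function.Injective χ := by
    rintro ⟨i, j⟩ ⟨i', j'⟩ hij
    have h1 : ∀ x y : F, frob F p n i x * frob F p n j y = frob F p n i' x * frob F p n j' y :=
      fun x y => DFunLike.congr_fun hij (x, y)
    refine Prod.ext (frob_injective hF hp2 fun x => ?_) (frob_injective hF hp2 fun x => ?_)
    · simpa using h1 x 1
    · simpa using h1 1 x
  have hli := (linearIndependent_monoidHom (F × F) F).comp _ hinj
  rw [Fintype.linearIndependent_iff] at hli
  have := hli (fun ij => c ij.1 ij.2 - c' ij.1 ij.2) (by
    funext xy
    have := h xy.1 xy.2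
    simpa [χ, Fintype.sum_prod_type, sub_mul, sub_eq_zero] using this)
  funext i j
  exact sub_eq_zero.1 (this (i, j))

lemma frob_sum (hF : Fintype.card F = p ^ n) (a : ZMod n → F) (k : ZMod n) (x : F) :
    frob F p n k (∑ i, a i * frob F p n i x) =
      ∑ i, frob F p n k (a (i - k)) * frob F p n i x := by
  rw [map_sum]
  refine Eq.trans ?_ (Equiv.sum_comp (Equiv.addRight k) _)
  refine Finset.sum_congr rfl fun i _ => ?_
  simp [frob_add hF, add_comm i k]

lemma frob_sum_sum (hF : Fintype.card F = p ^ n) (c : ZMod n → ZMod n → F) (k : ZMod n) (x y : F) :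
    frob F p n k (∑ i, ∑ j, c i j * (frob F p n i x * frob F p n j y)) =
      ∑ i, ∑ j, frob F p n k (c (i - k) (j - k)) * (frob F p n i x * frob F p n j y) := by
  rw [map_sum]
  refine Eq.trans ?_ (Equiv.sum_comp (Equiv.addRight k) _)
  refine Finset.sum_congr rfl fun i _ => ?_
  rw [map_sum]
  refine Eq.trans ?_ (Equiv.sum_comp (Equiv.addRight k) _)
  refine Finset.sum_congr rfl fun j _ => ?_
  simp [frob_add hF, add_comm i k, add_comm j k]

/-! ### Bi-additive maps with restricted support -/

variable (F p n) in
/-- `Supported F p n D B` says that `B x y` is a linear combination of the products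
`x ^ p ^ i * y ^ p ^ j` with `j - i ∈ D`. -/
def Supported (D : Set (ZMod n)) (B : F → F → F) : Prop :=
  ∃ c : ZMod n → ZMod n → F, (∀ i j, j - i ∉ D → c i j = 0) ∧
    ∀ x y, B x y = ∑ i, ∑ j, c i j * (frob F p n i x * frob F p n j y)

variable {D : Set (ZMod n)} {B B' : F → F → F}

lemma Supported.add (h : Supported F p n D B) (h' : Supported F p n D B') :
    Supported F p n D (fun x y => B x y + B' x y) := by
  obtain ⟨c, hc, e⟩ := h
  obtain ⟨c', hc', e'⟩ := h'
  refine ⟨fun i j => c i j + c' i j, fun i j hij => by simp [hc i j hij, hc' i j hij], ?_⟩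
  intro x y
  simp only [e, e', add_mul, Finset.sum_add_distrib]

lemma Supported.smul (r : F) (h : Supported F p n D B) :
    Supported F p n D (fun x y => r * B x y) := by
  obtain ⟨c, hc, e⟩ := h
  refine ⟨fun i j => r * c i j, fun i j hij => by simp [hc i j hij], ?_⟩
  intro x y
  simp only [e, Finset.mul_sum, mul_assoc]

lemma Supported.comp_frob (hF : Fintype.card F = p ^ n) (k : ZMod n) (h : Supported F p n D B) :
    Supported F p n D (fun x y => frob F p n k (B x y)) := by
  obtain ⟨c, hc, e⟩ := h
  refine ⟨fun i j => frob F p n k (c (i - k) (j - k)), fun i j hij => ?_, ?_⟩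
  · simp [hc (i - k) (j - k) (by simpa using hij)]
  · intro x y
    simp only [e, frob_sum_sum hF]

lemma supported_mul (i j : ZMod n) (hij : j - i ∈ D) :
    Supported F p n D (fun x y => frob F p n i x * frob F p n j y) := by
  classical
  refine ⟨fun i' j' => if i' = i ∧ j' = j then 1 else 0, ?_, ?_⟩
  · rintro i' j' h
    refine if_neg ?_
    rintro ⟨rfl, rfl⟩
    exact h hij
  · intro x y
    rw [Finset.sum_eq_single i, Finset.sum_eq_single j] <;> simp +contextual

lemma Supported.additive (hF : Fintype.card F = p ^ n) (hp2 : p ≠ 2) (G : F → F)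
    (hG : ∀ x y, G (x + y) = G x + G y) (h : Supported F p n D B) :
    Supported F p n D (fun x y => G (B x y)) := by
  classical
  obtain ⟨a, ha⟩ := exists_linearized hF hp2 G hG
  simp only [ha]
  generalize (Finset.univ : Finset (ZMod n)) = T
  induction T using Finset.induction_on with
  | empty => exact ⟨fun _ _ => 0, fun _ _ _ => rfl, by simp⟩
  | insert i T hi ih =>
    simp only [Finset.sum_insert hi]
    exact ((h.comp_frob hF i).smul (a i)).add ih

/-- Support conditions are read off from any expansion. -/
lemma Supported.coeff_eq_zero (hF : Fintype.card F = p ^ n) (hp2 : p ≠ 2)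
    (h : Supported F p n D B) (c : ZMod n → ZMod n → F)
    (e : ∀ x y, B x y = ∑ i, ∑ j, c i j * (frob F p n i x * frob F p n j y))
    {i j : ZMod n} (hij : j - i ∉ D) : c i j = 0 := by
  obtain ⟨c', hc', e'⟩ := h
  rw [bilin_coeff_unique hF hp2 c c' fun x y => by rw [← e, ← e']]
  exact hc' i j hij

lemma sum_mul_frob_sum (a b : ZMod n → F) (x y : F) :
    (∑ i, a i * frob F p n i x) * (∑ j, b j * frob F p n j y) =
      ∑ i, ∑ j, a i * b j * (frob F p n i x * frob F p n j y) := by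
  rw [Finset.sum_mul_sum]
  refine Finset.sum_congr rfl fun i _ => Finset.sum_congr rfl fun j _ => ?_
  ring

/-! ### Isotopisms of the Budaghyan–Helleseth multiplications -/

lemma frob_zero (x : F) : frob F p n 0 x = x := by
  simp [frob]

variable (p n) in
/-- The Budaghyan–Helleseth multiplication with the exponents `q ^ l` and `q ^ e` replaced by the
powers of the Frobenius of index `s` and `t`. -/
noncomputable def bhFrob (s t : ZMod n) (β ω x y : F) : F :=
  frob F p n s x * y + x * frob F p n s y +
    (β * (frob F p n t x * y + x * frob F p n t y) +
      frob F p n s β * frob F p n s (frob F p n t x * y + x * frob F p n t y)) * ω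

lemma supported_bhFrob (hF : Fintype.card F = p ^ n) {s t : ZMod n} (hs : s + s = 0) (β ω : F) :
    Supported F p n {s, t, -t} (bhFrob p n s t β ω) := by
  have hs' : -s = s := neg_eq_of_add_eq_zero_left hs
  have base : ∀ k : ZMod n, k ∈ ({s, t, -t} : Set (ZMod n)) → -k ∈ ({s, t, -t} : Set (ZMod n)) →
      Supported F p n {s, t, -t} (fun x y => frob F p n k x * y + x * frob F p n k y) := by
    intro k h1 h2
    simpa only [frob_zero] using
      (supported_mul (F := F) (p := p) k 0 (by simpa using h2)).add
        (supported_mul (F := F) (p := p) 0 k (by simpa using h1))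
  have h1 := base s (by simp) (by simp [hs'])
  have h2 := base t (by simp) (by simp)
  obtain ⟨c, hc, e⟩ := h1.add
    (((h2.smul β).add ((h2.comp_frob hF s).smul (frob F p n s β))).smul ω)
  exact ⟨c, hc, fun x y => by rw [← e, bhFrob]; ring⟩

/-- If the coefficients of the two components of `N x * N y`, where `N x = ∑ a i * x ^ p ^ i`, vanish
at all `(i, j)` with `j - i ∉ {s, t, -t}`, then `t' = t` and only one `a i` is nonzero.
The first condition already confines the differences within the support of `a` to `0, ±(s + t)`;
the second one rules out `s + t`. -/
lemma monomial_of_coeff (hp2 : p ≠ 2) {s t t' : ZMod n}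
    (hs : s + s = 0) (hs0 : s ≠ 0) (ht0 : t ≠ 0) (ht'0 : t' ≠ 0) (htt' : t + t' ≠ 0)
    (hst' : s + t' ≠ 0) (hst't : s + t' ≠ t) (hpar : s + t + t + t' ≠ 0)
    {β : F} (hβ : β ≠ 0) (a : ZMod n → F) (i₀ : ZMod n) (ha : a i₀ ≠ 0) (m : ZMod n → ZMod n → F)
    (hm : ∀ i j, m i j = frob F p n t' (a (i - t')) * a j + a i * frob F p n t' (a (j - t')))
    (hPc : ∀ i j : ZMod n, j - i ∉ ({s, t, -t} : Set (ZMod n)) →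
      frob F p n s (a (i - s)) * a j + a i * frob F p n s (a (j - s)) = 0)
    (hQc : ∀ i j : ZMod n, j - i ∉ ({s, t, -t} : Set (ZMod n)) →
      β * m i j + frob F p n s β * frob F p n s (m (i - s) (j - s)) = 0) :
    t' = t ∧ ∀ j, j ≠ i₀ → a j = 0 := by
  have hs' : -s = s := neg_eq_of_add_eq_zero_left hs
  have h2 : (2 : F) ≠ 0 := Ring.two_ne_zero (by rwa [ringChar.eq F p])
  have hφ0 : ∀ (k : ZMod n) (x : F), x ≠ 0 → frob F p n k x ≠ 0 :=
    fun k x hx => (map_ne_zero _).2 hx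
  have hdisj : ∀ i, a i ≠ 0 → a (i - s) = 0 := by
    intro i hi
    have := hPc i i (by
      rw [sub_self]
      simp only [Set.mem_insert_iff, Set.mem_singleton_iff]
      rintro (e | e | e)
      · exact hs0 e.symm
      · exact ht0 e.symm
      · exact ht0 (neg_eq_zero.1 e.symm))
    have h3 : 2 * (a i * frob F p n s (a (i - s))) = 0 := by linear_combination this
    by_contra hne
    exact mul_ne_zero h2 (mul_ne_zero hi (hφ0 _ _ hne)) h3
  have hdiff : ∀ i j, a i ≠ 0 → a j ≠ 0 → j - i = 0 ∨ j - i = s + t ∨ j - i = s - t := by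
    intro i j hi hj
    have hjs : a (j + s) = 0 := by
      have := hdisj j hj
      rwa [sub_eq_add_neg, hs'] at this
    by_contra hne
    have := hPc i (j + s) (by
      simp only [Set.mem_insert_iff, Set.mem_singleton_iff]
      rintro (e | e | e)
      · exact hne (Or.inl (by linear_combination e))
      · exact hne (Or.inr (Or.inl (by linear_combination e - hs)))
      · exact hne (Or.inr (Or.inr (by linear_combination e - hs))))
    rw [hjs, mul_zero, zero_add, add_sub_cancel_right] at this
    exact mul_ne_zero hi (hφ0 _ _ hj) this
  have hno : ∀ i, a i ≠ 0 → a (i + s + t) ≠ 0 → False := by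
    intro i hi hit
    have h0 := hQc (i + s + t + t') i (by
      simp only [Set.mem_insert_iff, Set.mem_singleton_iff]
      rintro (e | e | e)
      · exact htt' (by linear_combination -e - hs)
      · exact hpar (by linear_combination -e)
      · exact hst' (by linear_combination -e))
    have hz : m (i + s + t + t' - s) (i - s) = 0 := by
      have : a (i + s + t + t' - s) = 0 := by
        by_contra hne
        rcases hdiff i _ hi hne with e | e | e
        · exact htt' (by linear_combination e)
        · exact hst' (by linear_combination e + hs)
        · exact hpar (by linear_combination e + hs)
      simp only [hm, hdisj i hi, this, mul_zero, zero_mul, add_zero]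
    rw [hz, map_zero, mul_zero, add_zero] at h0
    have hm0 := (mul_eq_zero.1 h0).resolve_left hβ
    simp only [hm, add_sub_cancel_right] at hm0
    by_cases hi' : a (i - t') = 0
    · rw [hi', map_zero, mul_zero, add_zero] at hm0
      exact mul_ne_zero (hφ0 _ _ hit) hi hm0
    -- Here `t' = -(s + t)`, and the coefficient in question is a diagonal one.
    · have h4 : i + s + t + t' = i := by
        rcases hdiff i _ hi hi' with e | e | e
        · exact absurd (by linear_combination -e) ht'0
        · linear_combination -e
        · exact absurd (by linear_combination -e) hst't
      have h5 : i - t' = i + s + t := by linear_combination -h4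
      rw [h4, h5] at hm0
      exact mul_ne_zero h2 (mul_ne_zero hi (hφ0 t' _ hit)) (by linear_combination hm0)
  have hmono : ∀ j, j ≠ i₀ → a j = 0 := by
    intro j hj
    by_contra hne
    rcases hdiff i₀ j ha hne with h1 | h1 | h1
    · exact hj (sub_eq_zero.1 h1)
    · refine hno i₀ ha ?_
      rwa [show i₀ + s + t = j by linear_combination -h1]
    · refine hno j hne ?_
      rwa [show j + s + t = i₀ by linear_combination h1 + hs]
  refine ⟨?_, hmono⟩
  by_contra hne
  have h0 := hQc (i₀ + t') i₀ (by
    simp only [Set.mem_insert_iff, Set.mem_singleton_iff]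
    rintro (e | e | e)
    · exact hst' (by linear_combination -e)
    · exact htt' (by linear_combination -e)
    · exact hne (by linear_combination -e))
  have h1 : a (i₀ + t') = 0 := hmono _ (by simpa using ht'0)
  have h3 : a (i₀ + t' - s) = 0 := hmono _ fun e => hst' (by linear_combination e + hs)
  have h4 : a (i₀ - s) = 0 := hdisj _ ha
  simp only [hm, h1, h3, h4, add_sub_cancel_right, mul_zero, zero_mul, add_zero, map_zero] at h0
  exact mul_ne_zero hβ (mul_ne_zero (hφ0 _ _ ha) ha) h0

/-- If `N x = ∑ a i * x ^ p ^ i` underlies an isotopism from the multiplication with parameter `t`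
to the one with parameter `t'`, then `t' = t` and only one coefficient of `N` is nonzero.
Here `s` stands for the index of `x ↦ x ^ q ^ l`. -/
lemma bhFrob_core (hF : Fintype.card F = p ^ n) (hp2 : p ≠ 2) {s t t' : ZMod n}
    (hs : s + s = 0) (hs0 : s ≠ 0) (ht0 : t ≠ 0) (ht'0 : t' ≠ 0) (htt' : t + t' ≠ 0)
    (hst' : s + t' ≠ 0) (hst't : s + t' ≠ t) (hpar : s + t + t + t' ≠ 0)
    {β ω : F} (hβ : β ≠ 0) (hω : ω ≠ 0) (hωs : frob F p n s ω = -ω)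
    (L : F → F) (hL : ∀ x y, L (x + y) = L x + L y)
    (a : ZMod n → F) (i₀ : ZMod n) (ha : a i₀ ≠ 0)
    (h : ∀ x y, L (bhFrob p n s t β ω x y) =
      bhFrob p n s t' β ω (∑ i, a i * frob F p n i x) (∑ i, a i * frob F p n i y)) :
    t' = t ∧ ∀ j, j ≠ i₀ → a j = 0 := by
  have h2 : (2 : F) ≠ 0 := Ring.two_ne_zero (by rwa [ringChar.eq F p])
  have hinv : ∀ x : F, frob F p n s (frob F p n s x) = x := by
    intro x
    rw [← frob_add hF, hs, frob_zero]
  have hsup := (supported_bhFrob (p := p) (n := n) hF (t := t) hs β ω).additive hF hp2 L hL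
  let N : F → F := fun x => ∑ i, a i * frob F p n i x
  have hN : ∀ x, N x = ∑ i, a i * frob F p n i x := fun _ => rfl
  have hNs : ∀ k x, frob F p n k (N x) = ∑ i, frob F p n k (a (i - k)) * frob F p n i x :=
    fun k x => frob_sum hF a k x
  have hLN : ∀ x y, L (bhFrob p n s t β ω x y) = bhFrob p n s t' β ω (N x) (N y) := h
  clear_value N
  let m : ZMod n → ZMod n → F := fun i j =>
    frob F p n t' (a (i - t')) * a j + a i * frob F p n t' (a (j - t'))
  have hm : ∀ x y, frob F p n t' (N x) * N y + N x * frob F p n t' (N y) =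
      ∑ i, ∑ j, m i j * (frob F p n i x * frob F p n j y) := by
    intro x y
    rw [hNs, hNs, hN, hN]
    simp only [m, sum_mul_frob_sum, add_mul, Finset.sum_add_distrib]
  refine monomial_of_coeff hp2 hs hs0 ht0 ht'0 htt' hst' hst't hpar hβ a i₀ ha m
    (fun _ _ => rfl) ?_ ?_
  -- The `GF(q ^ l)`-component of `z` is `(z + z ^ q ^ l) / 2`.
  · intro i j hij
    refine ((hsup.add (hsup.comp_frob hF s)).smul 2⁻¹).coeff_eq_zero hF hp2
      (fun i j => frob F p n s (a (i - s)) * a j + a i * frob F p n s (a (j - s))) ?_ hij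
    intro x y
    calc _ = frob F p n s (N x) * N y + N x * frob F p n s (N y) := by
          simp only [hLN]
          simp only [bhFrob, map_add, map_mul, hinv, hωs]
          field_simp
          ring
      _ = _ := by
          rw [hNs, hNs, hN, hN]
          simp only [sum_mul_frob_sum, add_mul, Finset.sum_add_distrib]
  -- The `ω`-component of `z` is `(z - z ^ q ^ l) / (2 * ω)`.
  · intro i j hij
    refine ((hsup.add ((hsup.comp_frob hF s).smul (-1))).smul (2 * ω)⁻¹).coeff_eq_zero hF hp2
      (fun i j => β * m i j + frob F p n s β * frob F p n s (m (i - s) (j - s))) ?_ hij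
    intro x y
    calc _ = β * (frob F p n t' (N x) * N y + N x * frob F p n t' (N y)) + frob F p n s β *
            frob F p n s (frob F p n t' (N x) * N y + N x * frob F p n t' (N y)) := by
          simp only [hLN]
          simp only [bhFrob, map_add, map_mul, hinv, hωs]
          field_simp
          ring
      _ = _ := by
          rw [hm, frob_sum_sum hF]
          simp only [Finset.mul_sum, add_mul, Finset.sum_add_distrib, mul_assoc]

end Frob

/-- Section 3 setup: one has d' = d, and N is a monomial map: there
exist a nonzero b ∈ F and an index i with 0 ≤ i ≤ 2lh − 1 such that N(x) = b·x^(p^i)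
for all x ∈ F. -/
theorem bh_dprime_eq_d_and_N_monomial (p h l d d' q : ℕ) (hp : p.Prime) (hpodd : Odd p)
    (hh : 0 < h) (hq : q = p ^ h) (hl : 2 < l)
    (hd1 : 1 ≤ d) (hd2 : d ≤ l - 1) (hgd : Nat.gcd l d = 1) (hod : Odd (l + d))
    (hd'1 : 1 ≤ d') (hd'2 : d' ≤ l - 1) (hgd' : Nat.gcd l d' = 1) (hod' : Odd (l + d'))
    (F : Type*) [Field F] [Fintype F] (hcard : Fintype.card F = q ^ (2 * l))
    (β ω : F) (hβ : ∀ w : F, β ≠ w ^ 2) (hω : ω ≠ 0) (hωtr : ω + ω ^ q ^ l = 0)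
    (L N : F → F) (hLb : Function.Bijective L) (hLa : ∀ x y : F, L (x + y) = L x + L y)
    (hNb : Function.Bijective N) (hNa : ∀ x y : F, N (x + y) = N x + N y)
    (hiso : ∀ x y : F, L (bhMul q l d β ω x y) = bhMul q l d' β ω (N x) (N y)) :
    d' = d ∧ ∃ b : F, b ≠ 0 ∧ ∃ i : ℕ, i ≤ 2 * l * h - 1 ∧
      ∀ x : F, N x = b * x ^ p ^ i := by
  subst hq
  have hp2 : p ≠ 2 := by rintro rfl; exact absurd hpodd (by decide)
  obtain ⟨n, hn⟩ : ∃ n, n = 2 * l * h := ⟨_, rfl⟩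
  have hnpos : 0 < n := by rw [hn]; positivity
  have : NeZero n := ⟨hnpos.ne'⟩
  have : Fact p.Prime := ⟨hp⟩
  have hF : Fintype.card F = p ^ n := by
    rw [hcard, ← pow_mul, hn]
    congr 1
    ring
  have : CharP F p := charP_of_card_eq_prime_pow (f := n) hF
  have hpow : ∀ (e : ℕ) (x : F), x ^ (p ^ h) ^ e = frob F p n ((e * h : ℕ) : ZMod n) x := by
    intro e x
    rw [frob_natCast hF, ← pow_mul, mul_comm]
  have hmul : ∀ (e : ℕ) (x y : F), bhMul (p ^ h) l e β ω x y =
      bhFrob p n ((l * h : ℕ) : ZMod n) ((e * h : ℕ) : ZMod n) β ω x y := by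
    intro e x y
    simp only [bhMul, bhFrob, hpow]
  have hz : ∀ k : ℕ, ((k * h : ℕ) : ZMod n) = 0 ↔ 2 * l ∣ k := by
    intro k
    rw [ZMod.natCast_eq_zero_iff, hn, Nat.mul_dvd_mul_iff_right hh]
  have hnz : ∀ k : ℕ, 0 < k → k < 2 * l → ((k * h : ℕ) : ZMod n) ≠ 0 := by
    intro k h1 h2 h3
    exact absurd (Nat.le_of_dvd h1 ((hz k).1 h3)) (by omega)
  have hlt : ∀ k : ℕ, k < 2 * l → k * h < n := by
    intro k hk
    rw [hn]
    exact Nat.mul_lt_mul_of_pos_right hk hh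
  have hcancel : ∀ k k' : ℕ, k < 2 * l → k' < 2 * l →
      ((k * h : ℕ) : ZMod n) = ((k' * h : ℕ) : ZMod n) → k = k' := by
    intro k k' hk hk' hkk
    rw [ZMod.natCast_eq_natCast_iff', Nat.mod_eq_of_lt (hlt k hk), Nat.mod_eq_of_lt (hlt k' hk')]
      at hkk
    exact Nat.eq_of_mul_eq_mul_right hh hkk
  obtain ⟨a, ha⟩ := exists_linearized hF hp2 N hNa
  obtain ⟨i₀, hi₀⟩ : ∃ i, a i ≠ 0 := by
    by_contra! hall
    have h0 : ∀ x, N x = 0 := fun x => by simp [ha, hall]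
    exact one_ne_zero (hNb.1 ((h0 1).trans (h0 0).symm))
  -- Each side condition is a congruence modulo `2 * l` among `l`, `d` and `d'`.
  have core := bhFrob_core (F := F) (p := p) (n := n) hF hp2 (s := ((l * h : ℕ) : ZMod n))
    (t := ((d * h : ℕ) : ZMod n)) (t' := ((d' * h : ℕ) : ZMod n))
    (by rw [← Nat.cast_add, ← add_mul, hz, two_mul])
    (hnz _ (by omega) (by omega)) (hnz _ (by omega) (by omega)) (hnz _ (by omega) (by omega))
    (by rw [← Nat.cast_add, ← add_mul]; exact hnz _ (by omega) (by omega))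
    (by rw [← Nat.cast_add, ← add_mul]; exact hnz _ (by omega) (by omega))
    (by
      rw [← Nat.cast_add, ← add_mul]
      intro heq
      have := hcancel _ _ (by omega) (by omega) heq
      omega)
    (by
      -- `l + 2 * d + d'` is odd, hence not a multiple of `2 * l`.
      rw [← Nat.cast_add, ← add_mul, ← Nat.cast_add, ← add_mul, ← Nat.cast_add, ← add_mul, Ne, hz]
      intro hdvd
      have h2 : 2 ∣ l + d + d + d' := (Dvd.intro _ rfl).trans hdvd
      obtain ⟨r, hr⟩ := hod'
      omega)
    (β := β) (ω := ω) (by simpa using hβ 0) hω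
    (by rw [← hpow]; exact (neg_eq_of_add_eq_zero_right hωtr).symm)
    L hLa a i₀ hi₀
    (by
      intro x y
      rw [← hmul, hiso, hmul, ha, ha])
  refine ⟨hcancel _ _ (by omega) (by omega) core.1, a i₀, hi₀, i₀.val, ?_, fun x => ?_⟩
  · have := ZMod.val_lt i₀
    omega
  · rw [ha, Finset.sum_eq_single i₀]
    · rw [frob, iterateFrobenius_def]
    · intro j _ hj
      rw [core.2 j hj, zero_mul]
    · simp
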